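/- The family of monomials {P Kⁱ Eʲ Fᵏ : i, j, k ≥ 0} ∪ {K̄ⁱ Eʲ Fᵏ : i ≥ 1, j, k ≥ 0} ∪ {Q Lⁱ Eʲ Fᵏ : i, j, k ≥ 0} ∪ {L̄ⁱ Eʲ Fᵏ : i ≥ 1, j, k ≥ 0} is a basis of U_{K,L,twist} as a ℂ-vector space; moreover the monomials among these with j + k even lie in P·U_{K,L,twist}·P ⊕ Q·U_{K,L,twist}·Q and those with j + k odd lie in P·U_{K,L,twist}·Q ⊕ Q·U_{K,L,twist}·P. -/

import Mathlib

/-!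
Put `T = K + L`, invertible with inverse `K̄ + L̄`. Then `T, E, F` satisfy the relations of
`U_q(sl₂)`, while `P, Q` are complementary idempotents commuting with `T` and interchanged when
moved past `E` or `F`. The four families of monomials together are the elements
`e_δ Tⁿ Eʲ Fᵏ` with `δ ∈ {P, Q}`, `n ∈ ℤ`, `j, k ∈ ℕ`; write `V` for the vector space with these
symbols `(δ, n, j, k)` as basis, and `φ : V → U` for the evaluation.

The formulas for left multiplication by a generator on such a monomial define operators on `V`
that satisfy all the relations (`TwistRel.of_ops`), so `U` acts on `V`. Applying this action to
`Ω = (P,0,0,0) + (Q,0,0,0)`, the vector evaluating to `1`, gives a linear map `ψ : U → V`.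
In `U` the same formulas hold (`TwistRel.F_mul_E_pow` is the key straightening identity), so `φ`
intertwines the two actions, whence `φ (ψ u) = u` and the monomials span; and `ψ` sends each
monomial to the corresponding basis vector, so they are linearly independent. The statement on the
Pierce components follows since moving `e_δ` through `Eʲ Fᵏ` interchanges `P` and `Q`
exactly `j + k` times.
-/


noncomputable section

inductive G6 : Type | K | Kb | L | Lb | E | F

abbrev FA6 : Type := FreeAlgebra ℂ G6

def XK : FA6 := FreeAlgebra.ι ℂ G6.K
def XKb : FA6 := FreeAlgebra.ι ℂ G6.Kb
def XL : FA6 := FreeAlgebra.ι ℂ G6.L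
def XLb : FA6 := FreeAlgebra.ι ℂ G6.Lb
def XE : FA6 := FreeAlgebra.ι ℂ G6.E
def XF : FA6 := FreeAlgebra.ι ℂ G6.F

/-- Relations of `U_{K,L,twist}`. -/
inductive relTwist (q : ℂ) : FA6 → FA6 → Prop
  | kkk : relTwist q (XK * XKb * XK) XK
  | kbk : relTwist q (XKb * XK * XKb) XKb
  | kc : relTwist q (XK * XKb) (XKb * XK)
  | lll : relTwist q (XL * XLb * XL) XL
  | lbl : relTwist q (XLb * XL * XLb) XLb
  | lc : relTwist q (XL * XLb) (XLb * XL)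
  | pq : relTwist q (XK * XKb + XL * XLb) 1
  | ke : relTwist q (XK * XE) (q ^ 2 • (XE * XL))
  | le : relTwist q (XL * XE) (q ^ 2 • (XE * XK))
  | kbe : relTwist q (XKb * XE) ((q ^ 2)⁻¹ • (XE * XLb))
  | lbe : relTwist q (XLb * XE) ((q ^ 2)⁻¹ • (XE * XKb))
  | kf : relTwist q (XK * XF) ((q ^ 2)⁻¹ • (XF * XL))
  | lf : relTwist q (XL * XF) ((q ^ 2)⁻¹ • (XF * XK))
  | kbf : relTwist q (XKb * XF) (q ^ 2 • (XF * XLb))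
  | lbf : relTwist q (XLb * XF) (q ^ 2 • (XF * XKb))
  | ef : relTwist q (XE * XF - XF * XE)
      ((q - q⁻¹)⁻¹ • ((XK + XL) - (XKb + XLb)))

/-- The algebra `U_{K,L,twist}`. -/
abbrev Utwist (q : ℂ) : Type := RingQuot (relTwist q)

def tK (q : ℂ) : Utwist q := RingQuot.mkAlgHom ℂ (relTwist q) XK
def tKb (q : ℂ) : Utwist q := RingQuot.mkAlgHom ℂ (relTwist q) XKb
def tL (q : ℂ) : Utwist q := RingQuot.mkAlgHom ℂ (relTwist q) XL
def tLb (q : ℂ) : Utwist q := RingQuot.mkAlgHom ℂ (relTwist q) XLb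
def tE (q : ℂ) : Utwist q := RingQuot.mkAlgHom ℂ (relTwist q) XE
def tF (q : ℂ) : Utwist q := RingQuot.mkAlgHom ℂ (relTwist q) XF
def tP (q : ℂ) : Utwist q := tK q * tKb q
def tQ (q : ℂ) : Utwist q := tL q * tLb q

/-- The PBW-type family of monomials
`{P Kⁱ Eʲ Fᵏ} ∪ {K̄^{i+1} Eʲ Fᵏ} ∪ {Q Lⁱ Eʲ Fᵏ} ∪ {L̄^{i+1} Eʲ Fᵏ}`. -/
def twistMono (q : ℂ) :
    (ℕ × ℕ × ℕ) ⊕ (ℕ × ℕ × ℕ) ⊕ (ℕ × ℕ × ℕ) ⊕ (ℕ × ℕ × ℕ) → Utwist q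
  | .inl (i, j, k) => tP q * tK q ^ i * tE q ^ j * tF q ^ k
  | .inr (.inl (i, j, k)) => tKb q ^ (i + 1) * tE q ^ j * tF q ^ k
  | .inr (.inr (.inl (i, j, k))) => tQ q * tL q ^ i * tE q ^ j * tF q ^ k
  | .inr (.inr (.inr (i, j, k))) => tLb q ^ (i + 1) * tE q ^ j * tF q ^ k

/-- `j + k` for each index of the family `twistMono`. -/
def jkSum : (ℕ × ℕ × ℕ) ⊕ (ℕ × ℕ × ℕ) ⊕ (ℕ × ℕ × ℕ) ⊕ (ℕ × ℕ × ℕ) → ℕ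
  | .inl (_, j, k) => j + k
  | .inr (.inl (_, j, k)) => j + k
  | .inr (.inr (.inl (_, j, k))) => j + k
  | .inr (.inr (.inr (_, j, k))) => j + k

/-- The Pierce component `s·U_{K,L,twist}·t`, as a `ℂ`-submodule. -/
def pierce (q : ℂ) (s t : Utwist q) : Submodule ℂ (Utwist q) :=
  LinearMap.range ((LinearMap.mulLeft ℂ s).comp (LinearMap.mulRight ℂ t))

/-! ### The relations in an arbitrary algebra -/

/-- The defining relations of `U_{K,L,twist}` for elements of an arbitrary algebra. The Boolean
index treats the two halves uniformly: `X false, Y false` play the roles of `K, K̄`, and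
`X true, Y true` those of `L, L̄`. -/
structure TwistRel (q : ℂ) {A : Type*} [Ring A] [Algebra ℂ A] (X Y : Bool → A) (E F : A) :
    Prop where
  xyx : ∀ δ, X δ * Y δ * X δ = X δ
  yxy : ∀ δ, Y δ * X δ * Y δ = Y δ
  xy : ∀ δ, X δ * Y δ = Y δ * X δ
  sum : X false * Y false + X true * Y true = 1
  xe : ∀ δ, X δ * E = q ^ 2 • (E * X (!δ))
  ye : ∀ δ, Y δ * E = (q ^ 2)⁻¹ • (E * Y (!δ))
  xf : ∀ δ, X δ * F = (q ^ 2)⁻¹ • (F * X (!δ))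
  yf : ∀ δ, Y δ * F = q ^ 2 • (F * Y (!δ))
  ef : E * F - F * E = (q - q⁻¹)⁻¹ • ((X false + X true) - (Y false + Y true))

/-- The element `e_δ Tⁿ`, i.e. `P Kⁱ`, `K̄ⁱ⁺¹`, `Q Lⁱ` or `L̄ⁱ⁺¹` according to `δ` and the sign
of `n`. -/
def twistCartan {A : Type*} [Ring A] (X Y : Bool → A) (δ : Bool) : ℤ → A
  | .ofNat i => X δ * Y δ * X δ ^ i
  | .negSucc i => Y δ ^ (i + 1)

/-- The coefficient of `T Eʲ⁻¹` in `Eʲ F - F Eʲ`. -/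
def coefT (q : ℂ) : ℕ → ℂ
  | 0 => 0
  | j + 1 => (q ^ 2)⁻¹ * coefT q j + (q - q⁻¹)⁻¹

/-- Minus the coefficient of `T⁻¹ Eʲ⁻¹` in `Eʲ F - F Eʲ`. -/
def coefTinv (q : ℂ) : ℕ → ℂ
  | 0 => 0
  | j + 1 => q ^ 2 * coefTinv q j + (q - q⁻¹)⁻¹

namespace TwistRel

variable {q : ℂ} {A : Type*} [Ring A] [Algebra ℂ A] {X Y : Bool → A} {E F : A}

lemma sum_not (h : TwistRel q X Y E F) (δ : Bool) : X δ * Y δ + X (!δ) * Y (!δ) = 1 := by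
  cases δ
  · exact h.sum
  · rw [add_comm]; exact h.sum

lemma idem_mul_not (h : TwistRel q X Y E F) (δ : Bool) :
    X δ * Y δ * (X (!δ) * Y (!δ)) = 0 := by
  have h1 : X (!δ) * Y (!δ) = 1 - X δ * Y δ := by rw [← h.sum_not δ]; abel
  rw [h1, mul_sub, mul_one, ← mul_assoc, h.xyx, sub_self]

lemma x_mul_x (h : TwistRel q X Y E F) (δ : Bool) : X δ * X (!δ) = 0 := by
  have h1 : X δ = X δ * (X δ * Y δ) := by rw [h.xy, ← mul_assoc, h.xyx]
  have h2 : X (!δ) = (X (!δ) * Y (!δ)) * X (!δ) := (h.xyx _).symm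
  calc X δ * X (!δ) = X δ * (X δ * Y δ) * ((X (!δ) * Y (!δ)) * X (!δ)) := by rw [← h1, ← h2]
    _ = X δ * (X δ * Y δ * (X (!δ) * Y (!δ))) * X (!δ) := by noncomm_ring
    _ = 0 := by rw [h.idem_mul_not]; simp

lemma y_eq (h : TwistRel q X Y E F) (δ : Bool) : Y δ = Y δ * Y δ * X δ := by
  rw [mul_assoc, ← h.xy, ← mul_assoc, h.yxy]

lemma y_mul_x (h : TwistRel q X Y E F) (δ : Bool) : Y δ * X (!δ) = 0 := by
  rw [h.y_eq, mul_assoc, h.x_mul_x, mul_zero]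

lemma x_mul_cartan (h : TwistRel q X Y E F) (δ : Bool) (n : ℤ) :
    X δ * twistCartan X Y δ n = twistCartan X Y δ (n + 1) := by
  rcases n with i | i
  · change X δ * (X δ * Y δ * X δ ^ i) = X δ * Y δ * X δ ^ (i + 1)
    rw [pow_succ', ← mul_assoc (X δ * Y δ), h.xyx, h.xy, ← mul_assoc, ← mul_assoc, h.xyx]
  · rcases i with _ | i
    · simp [twistCartan]
    · have e : (Int.negSucc (i + 1) + 1) = Int.negSucc i := by omega
      rw [e]
      change X δ * Y δ ^ (i + 1 + 1) = Y δ ^ (i + 1)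
      rw [pow_succ', pow_succ', ← mul_assoc, ← mul_assoc, h.xy, h.yxy]

lemma y_mul_cartan (h : TwistRel q X Y E F) (δ : Bool) (n : ℤ) :
    Y δ * twistCartan X Y δ n = twistCartan X Y δ (n - 1) := by
  rcases n with i | i
  · rcases i with _ | i
    · change Y δ * (X δ * Y δ * X δ ^ 0) = Y δ ^ (0 + 1)
      rw [pow_zero, mul_one, ← mul_assoc, h.yxy, zero_add, pow_one]
    · have e : (Int.ofNat (i + 1) - 1) = Int.ofNat i := by simp
      rw [e]
      change Y δ * (X δ * Y δ * X δ ^ (i + 1)) = X δ * Y δ * X δ ^ i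
      rw [← mul_assoc, ← mul_assoc, h.yxy, pow_succ', ← mul_assoc, h.xy]
  · have e : (Int.negSucc i - 1) = Int.negSucc (i + 1) := by omega
    rw [e]
    exact (pow_succ' _ _).symm

lemma idem_mul_cartan (h : TwistRel q X Y E F) (δ : Bool) (n : ℤ) :
    X δ * Y δ * twistCartan X Y δ n = twistCartan X Y δ n := by
  rw [mul_assoc, h.y_mul_cartan, h.x_mul_cartan, sub_add_cancel]

lemma x_mul_cartan_not (h : TwistRel q X Y E F) (δ : Bool) (n : ℤ) :
    X δ * twistCartan X Y (!δ) n = 0 := by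
  rw [← h.idem_mul_cartan, ← mul_assoc, ← mul_assoc, h.x_mul_x, zero_mul, zero_mul]

lemma y_mul_cartan_not (h : TwistRel q X Y E F) (δ : Bool) (n : ℤ) :
    Y δ * twistCartan X Y (!δ) n = 0 := by
  rw [← h.idem_mul_cartan, ← mul_assoc, ← mul_assoc, h.y_mul_x, zero_mul, zero_mul]

lemma cartan_zero {A : Type*} [Ring A] {X Y : Bool → A} (δ : Bool) :
    twistCartan X Y δ 0 = X δ * Y δ := by
  change X δ * Y δ * X δ ^ 0 = _
  rw [pow_zero, mul_one]

/-- Any property of the elements `e_δ Tⁿ` can be proved by multiplying by `X δ` and `Y δ` on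
the left. -/
lemma cartan_induction (h : TwistRel q X Y E F) (δ : Bool) {p : ℤ → A → Prop}
    (h0 : p 0 (X δ * Y δ)) (hx : ∀ n a, p n a → p (n + 1) (X δ * a))
    (hy : ∀ n a, p n a → p (n - 1) (Y δ * a)) (n : ℤ) : p n (twistCartan X Y δ n) := by
  induction n using Int.induction_on with
  | zero => rw [cartan_zero]; exact h0
  | succ i ih => rw [← h.x_mul_cartan]; exact hx _ _ ih
  | pred i ih => rw [← h.y_mul_cartan]; exact hy _ _ ih

lemma cartan_mul_x (h : TwistRel q X Y E F) (δ : Bool) (n : ℤ) :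
    twistCartan X Y δ n * X δ = twistCartan X Y δ (n + 1) := by
  rw [← h.x_mul_cartan]
  refine h.cartan_induction δ (p := fun _ a => a * X δ = X δ * a) ?_ ?_ ?_ n
  · rw [mul_assoc, ← h.xy]
  · intro _ a ha; rw [mul_assoc, ha]
  · intro _ a ha; rw [mul_assoc, ha, ← mul_assoc, ← h.xy, mul_assoc]

lemma cartan_mul_y (h : TwistRel q X Y E F) (δ : Bool) (n : ℤ) :
    twistCartan X Y δ n * Y δ = twistCartan X Y δ (n - 1) := by
  rw [← h.y_mul_cartan]
  refine h.cartan_induction δ (p := fun _ a => a * Y δ = Y δ * a) ?_ ?_ ?_ n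
  · rw [← mul_assoc, ← h.xy]
  · intro _ a ha; rw [mul_assoc, ha, ← mul_assoc, h.xy, mul_assoc]
  · intro _ a ha; rw [mul_assoc, ha]

lemma y_mul_y (h : TwistRel q X Y E F) (δ : Bool) : Y δ * Y (!δ) = 0 := by
  have := h.y_mul_cartan_not δ (-1)
  have e : twistCartan X Y (!δ) (-1) = Y (!δ) := pow_one _
  rwa [e] at this

lemma x_mul_y (h : TwistRel q X Y E F) (δ : Bool) : X δ * Y (!δ) = 0 := by
  have := h.x_mul_cartan_not δ (-1)
  have e : twistCartan X Y (!δ) (-1) = Y (!δ) := pow_one _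
  rwa [e] at this

lemma cartan_mul_idem (h : TwistRel q X Y E F) (δ : Bool) (n : ℤ) :
    twistCartan X Y δ n * (X δ * Y δ) = twistCartan X Y δ n := by
  rw [← mul_assoc, h.cartan_mul_x, h.cartan_mul_y, add_sub_cancel_right]

lemma cartan_mul_T (h : TwistRel q X Y E F) (δ : Bool) (n : ℤ) :
    twistCartan X Y δ n * (X false + X true) = twistCartan X Y δ (n + 1) := by
  have h0 : twistCartan X Y δ n * X (!δ) = 0 := by
    rw [← h.cartan_mul_idem, mul_assoc, mul_assoc, h.y_mul_x, mul_zero, mul_zero]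
  have h1 : X false + X true = X δ + X (!δ) := by cases δ <;> simp [add_comm]
  rw [h1, mul_add, h0, add_zero, h.cartan_mul_x]

lemma cartan_mul_Tinv (h : TwistRel q X Y E F) (δ : Bool) (n : ℤ) :
    twistCartan X Y δ n * (Y false + Y true) = twistCartan X Y δ (n - 1) := by
  have h0 : twistCartan X Y δ n * Y (!δ) = 0 := by
    rw [← h.cartan_mul_idem, mul_assoc, mul_assoc, h.y_mul_y, mul_zero, mul_zero]
  have h1 : Y false + Y true = Y δ + Y (!δ) := by cases δ <;> simp [add_comm]
  rw [h1, mul_add, h0, add_zero, h.cartan_mul_y]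

lemma ex (h : TwistRel q X Y E F) (hq : q ≠ 0) (δ : Bool) :
    E * X δ = (q ^ 2)⁻¹ • (X (!δ) * E) := by
  rw [h.xe, Bool.not_not, inv_smul_smul₀ (pow_ne_zero 2 hq)]

lemma ey (h : TwistRel q X Y E F) (hq : q ≠ 0) (δ : Bool) :
    E * Y δ = q ^ 2 • (Y (!δ) * E) := by
  rw [h.ye, Bool.not_not, smul_inv_smul₀ (pow_ne_zero 2 hq)]

lemma fx (h : TwistRel q X Y E F) (hq : q ≠ 0) (δ : Bool) :
    F * X δ = q ^ 2 • (X (!δ) * F) := by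
  rw [h.xf, Bool.not_not, smul_inv_smul₀ (pow_ne_zero 2 hq)]

lemma fy (h : TwistRel q X Y E F) (hq : q ≠ 0) (δ : Bool) :
    F * Y δ = (q ^ 2)⁻¹ • (Y (!δ) * F) := by
  rw [h.yf, Bool.not_not, inv_smul_smul₀ (pow_ne_zero 2 hq)]

lemma e_mul_idem (h : TwistRel q X Y E F) (hq : q ≠ 0) (δ : Bool) :
    E * (X δ * Y δ) = X (!δ) * Y (!δ) * E := by
  rw [← mul_assoc, h.ex hq, smul_mul_assoc, mul_assoc, h.ey hq, mul_smul_comm,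
    inv_smul_smul₀ (pow_ne_zero 2 hq), mul_assoc]

lemma f_mul_idem (h : TwistRel q X Y E F) (hq : q ≠ 0) (δ : Bool) :
    F * (X δ * Y δ) = X (!δ) * Y (!δ) * F := by
  rw [← mul_assoc, h.fx hq, smul_mul_assoc, mul_assoc, h.fy hq, mul_smul_comm,
    smul_inv_smul₀ (pow_ne_zero 2 hq), mul_assoc]

lemma e_mul_cartan (h : TwistRel q X Y E F) (hq : q ≠ 0) (δ : Bool) (n : ℤ) :
    E * twistCartan X Y δ n = (q ^ 2) ^ (-n) • (twistCartan X Y (!δ) n * E) := by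
  have hp : q ^ 2 ≠ 0 := pow_ne_zero 2 hq
  induction n using Int.induction_on with
  | zero => simp only [cartan_zero, h.e_mul_idem hq, neg_zero, zpow_zero, one_smul]
  | succ i ih =>
    rw [← h.x_mul_cartan, ← h.x_mul_cartan, ← mul_assoc, h.ex hq, smul_mul_assoc, mul_assoc, ih,
      mul_smul_comm, smul_smul, mul_assoc, neg_add, zpow_add₀ hp, zpow_neg_one, mul_comm]
  | pred i ih =>
    rw [← h.y_mul_cartan, ← h.y_mul_cartan, ← mul_assoc, h.ey hq, smul_mul_assoc, mul_assoc, ih,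
      mul_smul_comm, smul_smul, mul_assoc, neg_sub, sub_eq_add_neg, zpow_add₀ hp, zpow_one]

lemma f_mul_cartan (h : TwistRel q X Y E F) (hq : q ≠ 0) (δ : Bool) (n : ℤ) :
    F * twistCartan X Y δ n = (q ^ 2) ^ n • (twistCartan X Y (!δ) n * F) := by
  have hp : q ^ 2 ≠ 0 := pow_ne_zero 2 hq
  induction n using Int.induction_on with
  | zero => simp only [cartan_zero, h.f_mul_idem hq, zpow_zero, one_smul]
  | succ i ih =>
    rw [← h.x_mul_cartan, ← h.x_mul_cartan, ← mul_assoc, h.fx hq, smul_mul_assoc, mul_assoc, ih,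
      mul_smul_comm, smul_smul, mul_assoc, zpow_add₀ hp, zpow_one, mul_comm]
  | pred i ih =>
    rw [← h.y_mul_cartan, ← h.y_mul_cartan, ← mul_assoc, h.fy hq, smul_mul_assoc, mul_assoc, ih,
      mul_smul_comm, smul_smul, mul_assoc, sub_eq_add_neg, zpow_add₀ hp, zpow_neg_one, mul_comm]

lemma e_mul_T (h : TwistRel q X Y E F) (hq : q ≠ 0) :
    E * (X false + X true) = (q ^ 2)⁻¹ • ((X false + X true) * E) := by
  rw [mul_add, h.ex hq, h.ex hq, ← smul_add, ← add_mul, Bool.not_false, Bool.not_true, add_comm]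

lemma e_mul_Tinv (h : TwistRel q X Y E F) (hq : q ≠ 0) :
    E * (Y false + Y true) = q ^ 2 • ((Y false + Y true) * E) := by
  rw [mul_add, h.ey hq, h.ey hq, ← smul_add, ← add_mul, Bool.not_false, Bool.not_true, add_comm]

/-- Straightening `F Eʲ⁺¹`. The recursions for the coefficients come from moving one further `E`
from the left past `T` and `T⁻¹`. -/
lemma F_mul_E_pow (h : TwistRel q X Y E F) (hq : q ≠ 0) (j : ℕ) :
    F * E ^ (j + 1) = E ^ (j + 1) * F - coefT q (j + 1) • ((X false + X true) * E ^ j)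
      + coefTinv q (j + 1) • ((Y false + Y true) * E ^ j) := by
  have hFE : F * E = E * F - (q - q⁻¹)⁻¹ • ((X false + X true) - (Y false + Y true)) := by
    rw [← h.ef]; abel
  have eT := h.e_mul_T hq
  have eT' := h.e_mul_Tinv hq
  generalize X false + X true = T at *
  generalize Y false + Y true = T' at *
  induction j with
  | zero =>
    simp only [coefT, coefTinv, zero_add, pow_one, pow_zero, mul_one, mul_zero, hFE, smul_sub]
    abel
  | succ j ih =>
    have a1 : E * (T * E ^ j) = (q ^ 2)⁻¹ • (T * E ^ (j + 1)) := by
      rw [← mul_assoc, eT, smul_mul_assoc, mul_assoc, ← pow_succ']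
    have a2 : E * (T' * E ^ j) = q ^ 2 • (T' * E ^ (j + 1)) := by
      rw [← mul_assoc, eT', smul_mul_assoc, mul_assoc, ← pow_succ']
    rw [pow_succ' E (j + 1), ← mul_assoc, hFE, sub_mul, mul_assoc E F, ih, mul_add, mul_sub,
      mul_smul_comm, mul_smul_comm, a1, a2, smul_mul_assoc, sub_mul, coefT.eq_def q (j + 1 + 1),
      coefTinv.eq_def q (j + 1 + 1)]
    simp only [add_smul, mul_smul, smul_sub, smul_comm (q ^ 2)⁻¹, smul_comm (q ^ 2), mul_assoc]
    abel

end TwistRel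

/-! ### The representation on the span of formal monomials -/

/-- The indices `(δ, n, j, k)` of the formal monomials `e_δ Tⁿ Eʲ Fᵏ`. -/
abbrev MonoIdx : Type := Bool × ℤ × ℕ × ℕ

/-- The vector space of formal combinations of the monomials `e_δ Tⁿ Eʲ Fᵏ`. -/
abbrev MonoSpace : Type := MonoIdx →₀ ℂ

/-- The formal monomial `e_δ Tⁿ Eʲ Fᵏ`. -/
def mvec (δ : Bool) (n : ℤ) (j k : ℕ) : MonoSpace := Finsupp.single (δ, n, j, k) 1

/-- Left multiplication by `e_δ Tˢ`. -/
def opX (δ : Bool) (s : ℤ) : Module.End ℂ MonoSpace :=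
  Finsupp.linearCombination ℂ fun x : MonoIdx =>
    if x.1 = δ then mvec x.1 (x.2.1 + s) x.2.2.1 x.2.2.2 else 0

/-- Left multiplication by `E`. -/
def opE (q : ℂ) : Module.End ℂ MonoSpace :=
  Finsupp.linearCombination ℂ fun x : MonoIdx =>
    (q ^ 2) ^ (-x.2.1) • mvec (!x.1) x.2.1 (x.2.2.1 + 1) x.2.2.2

/-- Left multiplication by `F`. For `j = 0` the truncated subtraction `j - 1` is harmless, as both
coefficients vanish there. -/
def opF (q : ℂ) : Module.End ℂ MonoSpace :=
  Finsupp.linearCombination ℂ fun x : MonoIdx =>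
    (q ^ 2) ^ x.2.1 • (mvec (!x.1) x.2.1 x.2.2.1 (x.2.2.2 + 1)
      - coefT q x.2.2.1 • mvec (!x.1) (x.2.1 + 1) (x.2.2.1 - 1) x.2.2.2
      + coefTinv q x.2.2.1 • mvec (!x.1) (x.2.1 - 1) (x.2.2.1 - 1) x.2.2.2)

lemma opX_mvec (δ : Bool) (s : ℤ) (ε : Bool) (n : ℤ) (j k : ℕ) :
    opX δ s (mvec ε n j k) = if ε = δ then mvec ε (n + s) j k else 0 := by
  simp [opX, mvec]

lemma opE_mvec (q : ℂ) (ε : Bool) (n : ℤ) (j k : ℕ) :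
    opE q (mvec ε n j k) = (q ^ 2) ^ (-n) • mvec (!ε) n (j + 1) k := by
  simp only [opE, mvec, Finsupp.linearCombination_single, one_smul]

lemma opF_mvec (q : ℂ) (ε : Bool) (n : ℤ) (j k : ℕ) :
    opF q (mvec ε n j k) = (q ^ 2) ^ n • (mvec (!ε) n j (k + 1)
      - coefT q j • mvec (!ε) (n + 1) (j - 1) k + coefTinv q j • mvec (!ε) (n - 1) (j - 1) k) := by
  simp only [opF, mvec, Finsupp.linearCombination_single, one_smul]

lemma monoSpace_hom_ext {M : Type*} [AddCommMonoid M] [Module ℂ M] {f g : MonoSpace →ₗ[ℂ] M}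
    (h : ∀ ε n j k, f (mvec ε n j k) = g (mvec ε n j k)) : f = g := by
  refine Finsupp.lhom_ext' fun x => LinearMap.ext_ring ?_
  exact h x.1 x.2.1 x.2.2.1 x.2.2.2

lemma TwistRel.of_ops {q : ℂ} (hq : q ≠ 0) :
    TwistRel q (fun δ => opX δ 1) (fun δ => opX δ (-1)) (opE q) (opF q) where
  xyx δ := by
    refine monoSpace_hom_ext fun ε n j k => ?_
    by_cases hε : ε = δ <;> simp [opX_mvec, hε]
  yxy δ := by
    refine monoSpace_hom_ext fun ε n j k => ?_
    by_cases hε : ε = δ <;> simp [opX_mvec, hε]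
  xy δ := by
    refine monoSpace_hom_ext fun ε n j k => ?_
    by_cases hε : ε = δ <;> simp [opX_mvec, hε]
  sum := by
    refine monoSpace_hom_ext fun ε n j k => ?_
    cases ε <;> simp [opX_mvec]
  xe δ := by
    have hp : q ^ 2 ≠ 0 := pow_ne_zero 2 hq
    refine monoSpace_hom_ext fun ε n j k => ?_
    cases ε <;> cases δ <;>
      simp [opX_mvec, opE_mvec, -zpow_neg, -neg_add_rev, neg_add, zpow_add₀ hp,
        smul_smul] <;>
      match_scalars <;> simp [zpow_neg] <;> field_simp
  ye δ := by
    have hp : q ^ 2 ≠ 0 := pow_ne_zero 2 hq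
    refine monoSpace_hom_ext fun ε n j k => ?_
    cases ε <;> cases δ <;>
      simp [opX_mvec, opE_mvec, -zpow_neg, -neg_add_rev, neg_add, zpow_add₀ hp,
        smul_smul] <;>
      match_scalars <;> simp [zpow_neg] <;> field_simp
  xf δ := by
    have hp : q ^ 2 ≠ 0 := pow_ne_zero 2 hq
    refine monoSpace_hom_ext fun ε n j k => ?_
    cases ε <;> cases δ <;>
      simp [opX_mvec, opF_mvec, smul_smul] <;>
      match_scalars <;> simp [zpow_add₀ hp] <;> field_simp <;> simp
  yf δ := by
    have hp : q ^ 2 ≠ 0 := pow_ne_zero 2 hq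
    refine monoSpace_hom_ext fun ε n j k => ?_
    cases ε <;> cases δ <;>
      simp [opX_mvec, opF_mvec, smul_smul, ← sub_eq_add_neg] <;>
      match_scalars <;> simp [zpow_sub₀ hp] <;> field_simp <;> simp
  ef := by
    have hp : q ^ 2 ≠ 0 := pow_ne_zero 2 hq
    refine monoSpace_hom_ext fun ε n j k => ?_
    have hsum : ∀ s : ℤ, opX false s (mvec ε n j k) + opX true s (mvec ε n j k)
        = mvec ε (n + s) j k := by
      intro s
      cases ε <;> simp [opX_mvec]
    have hEF : opE q (opF q (mvec ε n j k)) = mvec ε n (j + 1) (k + 1)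
        - ((q ^ 2)⁻¹ * coefT q j) • mvec ε (n + 1) j k
        + (q ^ 2 * coefTinv q j) • mvec ε (n - 1) j k := by
      rcases j with _ | j
      · simp only [opE_mvec, opF_mvec, coefT, coefTinv, map_smul, zero_smul, sub_zero, add_zero,
          Bool.not_not, smul_smul, mul_zero, zpow_neg,
          mul_inv_cancel₀ (zpow_ne_zero n hp), one_smul]
      · simp only [opF_mvec, map_smul, map_add, map_sub, opE_mvec, Bool.not_not,
          Nat.add_sub_cancel, zpow_neg, zpow_add₀ hp, zpow_sub₀ hp, zpow_one]
        match_scalars <;> field_simp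
    have hFE : opF q (opE q (mvec ε n j k)) = mvec ε n (j + 1) (k + 1)
        - coefT q (j + 1) • mvec ε (n + 1) j k + coefTinv q (j + 1) • mvec ε (n - 1) j k := by
      rw [opE_mvec, map_smul, opF_mvec, smul_smul, zpow_neg, inv_mul_cancel₀ (zpow_ne_zero n hp),
        one_smul, Bool.not_not, Nat.add_sub_cancel]
    simp only [LinearMap.sub_apply, LinearMap.add_apply, LinearMap.smul_apply, Module.End.mul_apply,
      hEF, hFE, hsum, coefT, coefTinv, ← sub_eq_add_neg]
    module

/-! ### Comparing the algebra with the space of formal monomials -/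

/-- The generators `K, L` of `U_{K,L,twist}`, indexed by Booleans. -/
def uX (q : ℂ) (δ : Bool) : Utwist q := if δ then tL q else tK q

/-- The generators `K̄, L̄` of `U_{K,L,twist}`, indexed by Booleans. -/
def uY (q : ℂ) (δ : Bool) : Utwist q := if δ then tLb q else tKb q

lemma TwistRel.of_utwist (q : ℂ) : TwistRel q (uX q) (uY q) (tE q) (tF q) := by
  have key : ∀ {a b}, relTwist q a b →
      RingQuot.mkAlgHom ℂ (relTwist q) a = RingQuot.mkAlgHom ℂ (relTwist q) b :=
    fun h => RingQuot.mkAlgHom_rel ℂ h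
  constructor <;> try rintro (_ | _)
  all_goals simp only [uX, uY, tK, tKb, tL, tLb, tE, tF, Bool.not_false, Bool.not_true, if_true,
    Bool.false_eq_true, if_false]
  · simpa using key .kkk
  · simpa using key .lll
  · simpa using key .kbk
  · simpa using key .lbl
  · simpa using key .kc
  · simpa using key .lc
  · simpa using key .pq
  · simpa using key .ke
  · simpa using key .le
  · simpa using key .kbe
  · simpa using key .lbe
  · simpa using key .kf
  · simpa using key .lf
  · simpa using key .kbf
  · simpa using key .lbf
  · simpa using key .ef

/-- The operator on formal monomials by which a generator acts. -/
def genOp (q : ℂ) : G6 → Module.End ℂ MonoSpace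
  | .K => opX false 1
  | .Kb => opX false (-1)
  | .L => opX true 1
  | .Lb => opX true (-1)
  | .E => opE q
  | .F => opF q

/-- The action of `U_{K,L,twist}` on formal monomials. -/
def uRep (q : ℂ) (hq : q ≠ 0) : Utwist q →ₐ[ℂ] Module.End ℂ MonoSpace :=
  RingQuot.liftAlgHom ℂ ⟨FreeAlgebra.lift ℂ (genOp q), by
    have h := TwistRel.of_ops hq
    intro a b hab
    cases hab <;>
      simp only [XK, XKb, XL, XLb, XE, XF, map_mul, map_add, map_sub, map_smul, map_one,
        FreeAlgebra.lift_ι_apply, genOp]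
    · exact h.xyx false
    · exact h.yxy false
    · exact h.xy false
    · exact h.xyx true
    · exact h.yxy true
    · exact h.xy true
    · exact h.sum
    · exact h.xe false
    · exact h.xe true
    · exact h.ye false
    · exact h.ye true
    · exact h.xf false
    · exact h.xf true
    · exact h.yf false
    · exact h.yf true
    · exact h.ef⟩

lemma uRep_mk_ι (q : ℂ) (hq : q ≠ 0) (g : G6) :
    uRep q hq (RingQuot.mkAlgHom ℂ (relTwist q) (FreeAlgebra.ι ℂ g)) = genOp q g := by
  rw [uRep, RingQuot.liftAlgHom_mkAlgHom_apply, FreeAlgebra.lift_ι_apply]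

lemma uRep_uX (q : ℂ) (hq : q ≠ 0) (δ : Bool) : uRep q hq (uX q δ) = opX δ 1 := by
  cases δ
  · exact uRep_mk_ι q hq .K
  · exact uRep_mk_ι q hq .L

lemma uRep_uY (q : ℂ) (hq : q ≠ 0) (δ : Bool) : uRep q hq (uY q δ) = opX δ (-1) := by
  cases δ
  · exact uRep_mk_ι q hq .Kb
  · exact uRep_mk_ι q hq .Lb

lemma uRep_E (q : ℂ) (hq : q ≠ 0) : uRep q hq (tE q) = opE q := uRep_mk_ι q hq .E

lemma uRep_F (q : ℂ) (hq : q ≠ 0) : uRep q hq (tF q) = opF q := uRep_mk_ι q hq .F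

/-- The monomial `e_δ Tⁿ Eʲ Fᵏ` in `U_{K,L,twist}`. -/
def uMono (q : ℂ) (x : MonoIdx) : Utwist q :=
  twistCartan (uX q) (uY q) x.1 x.2.1 * tE q ^ x.2.2.1 * tF q ^ x.2.2.2

/-- The evaluation of formal monomials in `U_{K,L,twist}`. -/
def uEval (q : ℂ) : MonoSpace →ₗ[ℂ] Utwist q := Finsupp.linearCombination ℂ (uMono q)

lemma uEval_mvec (q : ℂ) (ε : Bool) (n : ℤ) (j k : ℕ) :
    uEval q (mvec ε n j k) = twistCartan (uX q) (uY q) ε n * tE q ^ j * tF q ^ k := by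
  simp only [uEval, mvec, Finsupp.linearCombination_single, one_smul, uMono]

/-- The vector `(P,0,0,0) + (Q,0,0,0)`, which evaluates to `P + Q = 1`. -/
def vac : MonoSpace := mvec false 0 0 0 + mvec true 0 0 0

lemma uEval_vac (q : ℂ) : uEval q vac = 1 := by
  simp only [vac, map_add, uEval_mvec, TwistRel.cartan_zero, pow_zero, mul_one]
  exact (TwistRel.of_utwist q).sum

/-- On generators, evaluation turns the operators on formal monomials into left multiplication. -/
lemma uEval_genOp (q : ℂ) (hq : q ≠ 0) (g : G6) (v : MonoSpace) :
    uEval q (genOp q g v)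
      = RingQuot.mkAlgHom ℂ (relTwist q) (FreeAlgebra.ι ℂ g) * uEval q v := by
  have h := TwistRel.of_utwist q
  have hX : ∀ δ v, uEval q (opX δ 1 v) = uX q δ * uEval q v := by
    intro δ v
    refine LinearMap.congr_fun (f := uEval q ∘ₗ opX δ 1)
      (g := LinearMap.mulLeft ℂ (uX q δ) ∘ₗ uEval q) (monoSpace_hom_ext fun ε n j k => ?_) v
    simp only [LinearMap.comp_apply, LinearMap.mulLeft_apply, opX_mvec, uEval_mvec, ← mul_assoc]
    by_cases hε : ε = δ
    · subst hε
      rw [if_pos rfl, uEval_mvec, h.x_mul_cartan]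
    · obtain rfl : ε = !δ := by cases ε <;> cases δ <;> simp_all
      rw [if_neg hε, h.x_mul_cartan_not, zero_mul, zero_mul, map_zero]
  have hY : ∀ δ v, uEval q (opX δ (-1) v) = uY q δ * uEval q v := by
    intro δ v
    refine LinearMap.congr_fun (f := uEval q ∘ₗ opX δ (-1))
      (g := LinearMap.mulLeft ℂ (uY q δ) ∘ₗ uEval q) (monoSpace_hom_ext fun ε n j k => ?_) v
    simp only [LinearMap.comp_apply, LinearMap.mulLeft_apply, opX_mvec, uEval_mvec, ← mul_assoc]
    by_cases hε : ε = δ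
    · subst hε
      rw [if_pos rfl, uEval_mvec, h.y_mul_cartan, sub_eq_add_neg]
    · obtain rfl : ε = !δ := by cases ε <;> cases δ <;> simp_all
      rw [if_neg hε, h.y_mul_cartan_not, zero_mul, zero_mul, map_zero]
  cases g with
  | K => exact hX false v
  | Kb => exact hY false v
  | L => exact hX true v
  | Lb => exact hY true v
  | E =>
    change uEval q (opE q v) = tE q * uEval q v
    refine LinearMap.congr_fun (f := uEval q ∘ₗ opE q)
      (g := LinearMap.mulLeft ℂ (tE q) ∘ₗ uEval q) (monoSpace_hom_ext fun ε n j k => ?_) v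
    simp only [LinearMap.comp_apply, LinearMap.mulLeft_apply, opE_mvec, uEval_mvec, map_smul]
    rw [← mul_assoc, ← mul_assoc, h.e_mul_cartan hq, pow_succ' (tE q), smul_mul_assoc, smul_mul_assoc,
      ← mul_assoc]
  | F =>
    change uEval q (opF q v) = tF q * uEval q v
    refine LinearMap.congr_fun (f := uEval q ∘ₗ opF q)
      (g := LinearMap.mulLeft ℂ (tF q) ∘ₗ uEval q) (monoSpace_hom_ext fun ε n j k => ?_) v
    simp only [LinearMap.comp_apply, LinearMap.mulLeft_apply, opF_mvec, uEval_mvec, map_smul,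
      map_add, map_sub]
    rw [← mul_assoc, ← mul_assoc, h.f_mul_cartan hq, smul_mul_assoc, smul_mul_assoc]
    congr 1
    rcases j with _ | j
    · simp only [coefT, coefTinv, zero_smul, sub_zero, add_zero, pow_zero, mul_one, pow_succ',
        mul_assoc]
    · rw [mul_assoc _ (tF q), h.F_mul_E_pow hq, mul_add, mul_sub, mul_smul_comm, mul_smul_comm,
        ← mul_assoc _ (uX q false + uX q true), ← mul_assoc _ (uY q false + uY q true),
        h.cartan_mul_T, h.cartan_mul_Tinv, add_mul, sub_mul, smul_mul_assoc, smul_mul_assoc,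
        Nat.add_sub_cancel, pow_succ' (tF q) k]
      simp only [mul_assoc]

lemma uEval_uRep (q : ℂ) (hq : q ≠ 0) (u : Utwist q) (v : MonoSpace) :
    uEval q (uRep q hq u v) = u * uEval q v := by
  obtain ⟨a, rfl⟩ := RingQuot.mkAlgHom_surjective ℂ (relTwist q) u
  induction a using FreeAlgebra.induction generalizing v with
  | grade0 r =>
    rw [AlgHom.commutes, AlgHom.commutes, Module.algebraMap_end_apply, map_smul,
      Algebra.smul_def]
  | grade1 g => rw [uRep_mk_ι, uEval_genOp q hq]
  | mul a b ha hb => rw [map_mul, map_mul, Module.End.mul_apply, ha, hb, mul_assoc]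
  | add a b ha hb => rw [map_add, map_add, LinearMap.add_apply, map_add, ha, hb, add_mul]

/-- Acting on `vac` recovers the formal monomial from the monomial in `U_{K,L,twist}`. -/
lemma uRep_uMono_vac (q : ℂ) (hq : q ≠ 0) (x : MonoIdx) :
    uRep q hq (uMono q x) vac = Finsupp.single x 1 := by
  obtain ⟨δ, n, j, k⟩ := x
  have hF : ∀ k : ℕ, uRep q hq (tF q ^ k) vac = mvec false 0 0 k + mvec true 0 0 k := by
    intro k
    induction k with
    | zero => rw [pow_zero, map_one, Module.End.one_apply, vac]
    | succ k ih =>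
      rw [pow_succ', map_mul, Module.End.mul_apply, ih, uRep_F, map_add, opF_mvec, opF_mvec]
      simp [coefT, coefTinv, add_comm]
  have hE : ∀ j : ℕ, uRep q hq (tE q ^ j) (mvec false 0 0 k + mvec true 0 0 k)
      = mvec false 0 j k + mvec true 0 j k := by
    intro j
    induction j with
    | zero => rw [pow_zero, map_one, Module.End.one_apply]
    | succ j ih =>
      rw [pow_succ', map_mul, Module.End.mul_apply, ih, uRep_E, map_add, opE_mvec, opE_mvec]
      simp [add_comm]
  have hT : ∀ n : ℤ, uRep q hq (twistCartan (uX q) (uY q) δ n)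
      (mvec false 0 j k + mvec true 0 j k) = mvec δ n j k := by
    refine (TwistRel.of_utwist q).cartan_induction δ
      (p := fun n a => uRep q hq a (mvec false 0 j k + mvec true 0 j k) = mvec δ n j k) ?_ ?_ ?_
    · rw [map_mul, Module.End.mul_apply, uRep_uX, uRep_uY]
      cases δ <;> simp [opX_mvec]
    · intro n a ha
      rw [map_mul, Module.End.mul_apply, ha, uRep_uX, opX_mvec, if_pos rfl]
    · intro n a ha
      rw [map_mul, Module.End.mul_apply, ha, uRep_uY, opX_mvec, if_pos rfl, sub_eq_add_neg]
  rw [uMono, map_mul, map_mul, Module.End.mul_apply, Module.End.mul_apply, hF, hE, hT, mvec]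

/-- The index `(δ, n, j, k)` of a member of the family `twistMono`. -/
def toIdx : (ℕ × ℕ × ℕ) ⊕ (ℕ × ℕ × ℕ) ⊕ (ℕ × ℕ × ℕ) ⊕ (ℕ × ℕ × ℕ) → MonoIdx
  | .inl (i, j, k) => (false, .ofNat i, j, k)
  | .inr (.inl (i, j, k)) => (false, .negSucc i, j, k)
  | .inr (.inr (.inl (i, j, k))) => (true, .ofNat i, j, k)
  | .inr (.inr (.inr (i, j, k))) => (true, .negSucc i, j, k)

lemma toIdx_injective : Function.Injective toIdx := by
  rintro (⟨i, j, k⟩ | ⟨i, j, k⟩ | ⟨i, j, k⟩ | ⟨i, j, k⟩)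
    (⟨i', j', k'⟩ | ⟨i', j', k'⟩ | ⟨i', j', k'⟩ | ⟨i', j', k'⟩) h <;> simp_all [toIdx]

lemma toIdx_surjective : Function.Surjective toIdx := by
  rintro ⟨_ | _, i | i, j, k⟩
  · exact ⟨.inl (i, j, k), rfl⟩
  · exact ⟨.inr (.inl (i, j, k)), rfl⟩
  · exact ⟨.inr (.inr (.inl (i, j, k))), rfl⟩
  · exact ⟨.inr (.inr (.inr (i, j, k))), rfl⟩

lemma twistMono_eq (q : ℂ) : twistMono q = uMono q ∘ toIdx := by
  funext x
  rcases x with (⟨i, j, k⟩ | ⟨i, j, k⟩ | ⟨i, j, k⟩ | ⟨i, j, k⟩) <;> rfl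

lemma jkSum_eq (x) : jkSum x = (toIdx x).2.2.1 + (toIdx x).2.2.2 := by
  rcases x with (⟨i, j, k⟩ | ⟨i, j, k⟩ | ⟨i, j, k⟩ | ⟨i, j, k⟩) <;> rfl

/-- Moving an idempotent leftwards through `m` letters among `E, F` applies `δ ↦ !δ` to its
label `m` times. -/
lemma uMono_mul_idem (q : ℂ) (hq : q ≠ 0) (x : MonoIdx) :
    uMono q x * (uX q (Bool.not^[x.2.2.1 + x.2.2.2] x.1) * uY q (Bool.not^[x.2.2.1 + x.2.2.2] x.1))
      = uMono q x := by
  have h := TwistRel.of_utwist q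
  obtain ⟨δ, n, j, k⟩ := x
  have hpow : ∀ a : Utwist q, (∀ δ, a * (uX q δ * uY q δ) = uX q (!δ) * uY q (!δ) * a) →
      ∀ (m : ℕ) (δ : Bool), a ^ m * (uX q (Bool.not^[m] δ) * uY q (Bool.not^[m] δ))
        = uX q δ * uY q δ * a ^ m := by
    intro a ha m
    induction m with
    | zero => intro δ; simp
    | succ m ih =>
      intro δ
      rw [Function.iterate_succ_apply, pow_succ', mul_assoc, ih, ← mul_assoc, ha, Bool.not_not,
        mul_assoc]
  simp only [uMono]
  rw [add_comm j k, Function.iterate_add_apply, mul_assoc, hpow _ (h.f_mul_idem hq),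
    ← mul_assoc, mul_assoc _ (tE q ^ j), hpow _ (h.e_mul_idem hq), ← mul_assoc, h.cartan_mul_idem]

lemma uMono_mem_pierce (q : ℂ) (hq : q ≠ 0) (x : MonoIdx) :
    uMono q x ∈ pierce q (uX q x.1 * uY q x.1)
      (uX q (Bool.not^[x.2.2.1 + x.2.2.2] x.1) * uY q (Bool.not^[x.2.2.1 + x.2.2.2] x.1)) := by
  refine ⟨uMono q x, ?_⟩
  rw [LinearMap.comp_apply, LinearMap.mulRight_apply, LinearMap.mulLeft_apply,
    uMono_mul_idem q hq, uMono, ← mul_assoc, ← mul_assoc,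
    (TwistRel.of_utwist q).idem_mul_cartan]

/-- The family `{P Kⁱ Eʲ Fᵏ : i,j,k ≥ 0} ∪ {K̄ⁱ Eʲ Fᵏ : i ≥ 1, j,k ≥ 0} ∪
{Q Lⁱ Eʲ Fᵏ : i,j,k ≥ 0} ∪ {L̄ⁱ Eʲ Fᵏ : i ≥ 1, j,k ≥ 0}` is a basis of
`U_{K,L,twist}` over `ℂ`; the monomials with `j + k` even lie in
`P·U·P ⊕ Q·U·Q` and those with `j + k` odd lie in `P·U·Q ⊕ Q·U·P`. -/
theorem statement9 (q : ℂ) (hq0 : q ≠ 0) (hq1 : q ≠ 1) (hqm1 : q ≠ -1) :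
    LinearIndependent ℂ (twistMono q) ∧
    Submodule.span ℂ (Set.range (twistMono q)) = ⊤ ∧
    (∀ x, Even (jkSum x) →
      twistMono q x ∈ pierce q (tP q) (tP q) ⊔ pierce q (tQ q) (tQ q)) ∧
    (∀ x, ¬ Even (jkSum x) →
      twistMono q x ∈ pierce q (tP q) (tQ q) ⊔ pierce q (tQ q) (tP q)) := by
  rw [twistMono_eq]
  refine ⟨?_, ?_, ?_, ?_⟩
  · refine LinearIndependent.comp ?_ toIdx toIdx_injective
    refine LinearIndependent.of_comp (LinearMap.applyₗ vac ∘ₗ (uRep q hq0).toLinearMap) ?_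
    convert Finsupp.linearIndependent_single_one ℂ MonoIdx using 1
    funext x
    exact uRep_uMono_vac q hq0 x
  · rw [Set.range_comp, toIdx_surjective.range_eq, Set.image_univ,
      ← Finsupp.range_linearCombination, LinearMap.range_eq_top]
    intro u
    refine ⟨uRep q hq0 u vac, ?_⟩
    exact (uEval_uRep q hq0 u vac).trans (by rw [uEval_vac, mul_one])
  · intro x hx
    have h := uMono_mem_pierce q hq0 (toIdx x)
    rw [← jkSum_eq, Bool.involutive_not.iterate_even hx, id] at h
    rcases hδ : (toIdx x).1 <;> rw [hδ] at h
    · exact Submodule.mem_sup_left h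
    · exact Submodule.mem_sup_right h
  · intro x hx
    have h := uMono_mem_pierce q hq0 (toIdx x)
    rw [← jkSum_eq, Bool.involutive_not.iterate_odd (Nat.not_even_iff_odd.mp hx)] at h
    rcases hδ : (toIdx x).1 <;> rw [hδ] at h
    · exact Submodule.mem_sup_left h
    · exact Submodule.mem_sup_right h
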